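/- There is no injective unital ℂ-algebra homomorphism from the algebra F_∞ = ℂ[[X₁,X₂,…]] of formal power series in countably many commuting indeterminates with complex coefficients (i.e. MvPowerSeries ℕ ℂ) into the algebra F = ℂ[[X]] of formal power series in one indeterminate (i.e. PowerSeries ℂ). In particular there is neither an algebraic nor a topological embedding of F_∞ into F. -/

import Mathlib

/-!
Suppose that `φ` embeds the power series in at least two variables over a field `k` into `k⟦X⟧`,
and let `X i`, `X j` be distinct variables. Restricting `φ` to the power series in `X i` gives a
`k`-algebra endomorphism `ψ` of `k⟦X⟧` with `ψ X ≠ 0`. Such a `ψ` automatically preserves constant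
coefficients, so `ψ X` is a nonzero nonunit; by Weierstrass preparation `k⟦X⟧ ⧸ (ψ X)` is finite
over `k`, and `X`-adic completeness lifts this to finiteness of `k⟦X⟧` over `k⟦X⟧` along `ψ`. Hence
`φ (X j)` is integral over the image of `ψ`, and by injectivity `X j` is integral over the power
series in `X i`; comparing coefficients at `X j ^ n` rules out any monic relation of degree `n`.
-/

theorem isPrecomplete_pi {R ι : Type*} [CommRing R] [Finite ι] (I : Ideal R) (M : ι → Type*)
    [∀ i, AddCommGroup (M i)] [∀ i, Module R (M i)] [∀ i, IsPrecomplete I (M i)] :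
    IsPrecomplete I (∀ i, M i) := by
  classical
  cases nonempty_fintype ι
  refine AdicCompletion.of_surjective_iff.mp fun y ↦ ?_
  choose x hx using fun i ↦
    AdicCompletion.of_surjective I (M i) (AdicCompletion.piEquivOfFintype I M y i)
  refine ⟨x, (AdicCompletion.piEquivOfFintype I M).injective (funext fun i ↦ ?_)⟩
  rw [← hx i, AdicCompletion.piEquivOfFintype_apply]
  ext n
  simp

theorem module_finite_of_finite_quotient_smul_top {R M : Type*} [CommRing R] [AddCommGroup M]
    [Module R M] (I : Ideal R) [IsPrecomplete I R] [IsHausdorff I M]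
    [Module.Finite R (M ⧸ (I • ⊤ : Submodule R M))] : Module.Finite R M := by
  obtain ⟨n, f, hf⟩ := Module.Finite.exists_fin' R (M ⧸ (I • ⊤ : Submodule R M))
  obtain ⟨g, hg⟩ := Module.projective_lifting_property _ f (Submodule.mkQ_surjective (I • ⊤))
  have := isPrecomplete_pi I fun _ : Fin n ↦ R
  exact .of_surjective g (surjective_of_mkQ_comp_surjective (I := I) (hg ▸ hf))

theorem ringHom_finite_of_finite_mk_map_comp {R S : Type*} [CommRing R] [CommRing S] (f : R →+* S)
    (I : Ideal R) [IsPrecomplete I R] [hausdorff : IsHausdorff (I.map f) S]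
    (hf : ((Ideal.Quotient.mk (I.map f)).comp f).Finite) : f.Finite := by
  algebraize [f]
  have := IsHausdorff.map_algebraMap_iff.mp hausdorff
  have hmap : (I.map f).restrictScalars R = (I • ⊤ : Submodule R S) :=
    (Ideal.smul_top_eq_map I).symm
  have : Module.Finite R (S ⧸ (I • ⊤ : Submodule R S)) := hmap ▸ hf
  exact module_finite_of_finite_quotient_smul_top I

theorem module_finite_powerSeries_quotient_span {A : Type*} [CommRing A] [IsLocalRing A]
    [IsAdicComplete (IsLocalRing.maximalIdeal A) A] {g : PowerSeries A}
    (hg : g.map (IsLocalRing.residue A) ≠ 0) :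
    Module.Finite A (PowerSeries A ⧸ Ideal.span {g}) := by
  obtain ⟨f, h, H⟩ := g.exists_isWeierstrassFactorization hg
  have := H.isDistinguishedAt.monic.finite_quotient
  exact .equiv H.algEquivQuotient.toLinearEquiv

theorem constantCoeff_algHom_apply {σ τ k : Type*} [Field k]
    (φ : MvPowerSeries σ k →ₐ[k] MvPowerSeries τ k) (p : MvPowerSeries σ k) :
    (φ p).constantCoeff = p.constantCoeff := by
  let c : k := (φ p).constantCoeff
  have hφ : ¬ IsUnit (φ (p - algebraMap k _ c)) := by
    rw [map_sub, AlgHom.commutes, MvPowerSeries.isUnit_iff_constantCoeff]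
    simp [c, MvPowerSeries.algebraMap_apply]
  have hp : ¬ IsUnit (p - algebraMap k _ c) := fun h ↦ hφ (h.map φ)
  rw [MvPowerSeries.isUnit_iff_constantCoeff, isUnit_iff_ne_zero, not_not, map_sub,
    MvPowerSeries.algebraMap_apply, MvPowerSeries.constantCoeff_C] at hp
  exact (sub_eq_zero.mp hp).symm

theorem algHom_powerSeries_finite {k : Type*} [Field k] (ψ : PowerSeries k →ₐ[k] PowerSeries k)
    (hψ : ψ PowerSeries.X ≠ 0) : ψ.toRingHom.Finite := by
  let I : Ideal (PowerSeries k) := Ideal.span {PowerSeries.X}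
  have hI : I.map ψ.toRingHom = Ideal.span {ψ PowerSeries.X} := by
    simp [I, Ideal.map_span]
  have hnonunit : ¬ IsUnit (ψ PowerSeries.X) := by
    rw [PowerSeries.isUnit_iff_constantCoeff, isUnit_iff_ne_zero, not_not]
    exact (constantCoeff_algHom_apply ψ _).trans PowerSeries.constantCoeff_X
  have : IsHausdorff (I.map ψ.toRingHom) (PowerSeries k) :=
    .of_isDomain _ (by rwa [hI, Ne, Ideal.span_singleton_eq_top])
  have hresidue : (ψ PowerSeries.X).map (IsLocalRing.residue k) ≠ 0 :=
    (PowerSeries.map_eq_zero _ _).not.mpr hψ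
  refine ringHom_finite_of_finite_mk_map_comp _ I (.of_comp_finite (f := algebraMap k _) ?_)
  have hcomp : ((Ideal.Quotient.mk (I.map ψ.toRingHom)).comp ψ.toRingHom).comp
      (algebraMap k (PowerSeries k)) = algebraMap k (PowerSeries k ⧸ I.map ψ.toRingHom) :=
    ((Ideal.Quotient.mkₐ k (I.map ψ.toRingHom)).comp ψ).comp_algebraMap
  rw [hcomp, RingHom.finite_algebraMap, hI]
  exact module_finite_powerSeries_quotient_span hresidue

section Transcendence

variable {σ R : Type*} [CommRing R]

/-- The inclusion of the power series in the single variable `X i` into those in all variables. -/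
noncomputable abbrev singleVariableAlgHom (R : Type*) [CommRing R] (i : σ) :
    PowerSeries R →ₐ[R] MvPowerSeries σ R :=
  PowerSeries.substAlgHom (PowerSeries.HasSubst.X i)

open Finsupp in
theorem coeff_singleVariableAlgHom_mul_X_pow {i j : σ} (hij : i ≠ j) (a : PowerSeries R)
    (m n l : ℕ) :
    MvPowerSeries.coeff (single i m + single j n)
      (singleVariableAlgHom R i a * MvPowerSeries.X j ^ l) =
        if l = n then PowerSeries.coeff m a else 0 := by
  classical
  have hle : single j l ≤ single i m + single j n ↔ l ≤ n := by
    rw [single_le_iff, Finsupp.add_apply, single_eq_of_ne' hij, single_eq_same, zero_add]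
  rw [MvPowerSeries.X_pow_eq, MvPowerSeries.coeff_mul_monomial, mul_one,
    PowerSeries.coe_substAlgHom, PowerSeries.coeff_subst_single]
  by_cases hln : l ≤ n
  · have hsub : single i m + single j n - single j l = single i m + single j (n - l) := by
      rw [single_tsub, add_tsub_assoc_of_le (single_le_single.mpr hln)]
    have happly : (single i m + single j (n - l)) i = m := by
      rw [Finsupp.add_apply, single_eq_same, single_eq_of_ne hij, add_zero]
    have hsingle : single i m + single j (n - l) = single i m ↔ l = n := by
      rw [add_eq_left, single_eq_zero]
      omega
    rw [if_pos (hle.mpr hln), hsub, happly]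
    exact if_congr hsingle rfl rfl
  · rw [if_neg (hle.not.mpr hln), if_neg (by omega)]

theorem coeff_eval₂_singleVariableAlgHom_X {i j : σ} (hij : i ≠ j)
    (p : Polynomial (PowerSeries R)) (m n : ℕ) :
    MvPowerSeries.coeff (Finsupp.single i m + Finsupp.single j n)
      (p.eval₂ (singleVariableAlgHom R i).toRingHom (MvPowerSeries.X j)) =
        PowerSeries.coeff m (p.coeff n) := by
  induction p using Polynomial.induction_on' with
  | add p q hp hq => rw [Polynomial.eval₂_add, map_add, hp, hq, Polynomial.coeff_add, map_add]
  | monomial l a =>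
    rw [Polynomial.eval₂_monomial, Polynomial.coeff_monomial, apply_ite (PowerSeries.coeff m),
      map_zero]
    exact coeff_singleVariableAlgHom_mul_X_pow hij a m n l

theorem not_isIntegralElem_singleVariableAlgHom_X [Nontrivial R] {i j : σ} (hij : i ≠ j) :
    ¬ (singleVariableAlgHom R i).toRingHom.IsIntegralElem (MvPowerSeries.X j) := by
  rintro ⟨p, hp, hpX⟩
  have hcoeff := coeff_eval₂_singleVariableAlgHom_X hij p 0 p.natDegree
  rw [hpX, hp.coeff_natDegree, map_zero, PowerSeries.coeff_zero_one] at hcoeff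
  exact zero_ne_one hcoeff

end Transcendence

theorem no_embedding_Finfty_into_F_general {σ k : Type*} [Nontrivial σ] [Field k] :
    ¬ ∃ f : MvPowerSeries σ k →ₐ[k] PowerSeries k, Function.Injective f := by
  rintro ⟨φ, hφ⟩
  obtain ⟨i, j, hij⟩ := exists_pair_ne σ
  have hX : (φ.comp (singleVariableAlgHom k i)) PowerSeries.X ≠ 0 := by
    rw [AlgHom.comp_apply, PowerSeries.substAlgHom_X, map_ne_zero_iff φ hφ]
    exact nonZeroDivisors.ne_zero MvPowerSeries.X_mem_nonzeroDivisors
  have hint := (algHom_powerSeries_finite _ hX).to_isIntegral (φ (MvPowerSeries.X j))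
  exact not_isIntegralElem_singleVariableAlgHom_X hij (hint.of_map hφ)

/-- **No embedding of `F_∞` into `F`.**
There is no injective unital `ℂ`-algebra homomorphism from the algebra
`F_∞ = ℂ[[X₁, X₂, …]] = MvPowerSeries ℕ ℂ` of formal power series in countably many
commuting indeterminates into the algebra `F = ℂ[[X]] = PowerSeries ℂ` of formal power
series in one indeterminate.  In particular there is neither an algebraic nor a
topological embedding of `F_∞` into `F`. -/
theorem no_embedding_Finfty_into_F :
    ¬ ∃ f : MvPowerSeries ℕ ℂ →ₐ[ℂ] PowerSeries ℂ, Function.Injective f :=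
  no_embedding_Finfty_into_F_general
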